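/- Let γ be a finite Borel measure on ℝ^d with 0 < ∫ |x|² dγ(x) < ∞, and let h : (0,∞) → (0,∞) be concave and nondecreasing. Let ρ : ℝ^d → (0,∞) and w : ℝ^d → ℝ^d be measurable with ∫ |x|² ρ(x) dγ(x) < ∞. Then the first moment of |w|·γ satisfies ( ∫_{ℝ^d} |x| |w(x)| dγ(x) )² ≤ ( ∫_{ℝ^d} |w|²/h(ρ) dγ ) · m₂(γ) · h( m₂(ργ)/m₂(γ) ), where m₂(γ) := ∫ |x|² dγ and m₂(ργ) := ∫ |x|² ρ dγ. -/

import Mathlib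

open Set MeasureTheory ENNReal

/-!
Write `|x| |w| = (|w| / √(h ∘ ρ)) · (|x| √(h ∘ ρ))`. Cauchy–Schwarz leaves the integral
`∫ |x|² h(ρ) dγ`, and Jensen's inequality for the measure `|x|² γ` bounds it by
`m₂(γ) h(m₂(ργ) / m₂(γ))`.
-/

lemma exists_forall_le_add_mul_sub_of_concaveOn {s : Set ℝ} {h : ℝ → ℝ} {a : ℝ}
    (hconc : ConcaveOn ℝ s h) (ha : a ∈ interior s) :
    ∃ c : ℝ, ∀ y ∈ s, h y ≤ h a + c * (y - a) := by
  have hconv : ConvexOn ℝ s (-h) := hconc.neg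
  refine ⟨-derivWithin (-h) (Ioi a) a, fun y hy => ?_⟩
  rcases lt_trichotomy y a with hya | rfl | hay
  · have hslope := (hconv.slope_le_leftDeriv_of_mem_interior hy ha hya).trans
      (hconv.leftDeriv_le_rightDeriv_of_mem_interior ha)
    rw [slope_def_field, div_le_iff₀ (sub_pos.2 hya)] at hslope
    simp only [Pi.neg_apply] at hslope
    linarith
  · simp
  · have hslope := hconv.rightDeriv_le_slope_of_mem_interior ha hy hay
    rw [slope_def_field, le_div_iff₀ (sub_pos.2 hay)] at hslope
    simp only [Pi.neg_apply] at hslope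
    linarith

section MeasureSpace

variable {α : Type*} [MeasurableSpace α] {μ : Measure α}

lemma aemeasurable_comp_of_continuousOn {β γ : Type*} [TopologicalSpace β] [MeasurableSpace β]
    [OpensMeasurableSpace β] [TopologicalSpace γ] [MeasurableSpace γ] [BorelSpace γ]
    {s : Set β} {h : β → γ} {ρ : α → β} (hs : MeasurableSet s) (hcont : ContinuousOn h s)
    (hρ : AEMeasurable ρ μ) (hρs : ∀ᵐ x ∂μ, ρ x ∈ s) :
    AEMeasurable (fun x => h (ρ x)) μ := by
  have hmap : (μ.map ρ).restrict s = μ.map ρ :=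
    Measure.restrict_eq_self_of_ae_mem ((ae_map_iff hρ hs).2 hρs)
  have hh : AEMeasurable h (μ.map ρ) := hmap ▸ hcont.aemeasurable hs
  exact hh.comp_aemeasurable hρ

lemma integral_mul_pos_of_ae_pos {u ρ : α → ℝ} (hu : 0 ≤ᵐ[μ] u)
    (hupos : 0 < ∫ x, u x ∂μ) (hρpos : ∀ᵐ x ∂μ, 0 < ρ x)
    (huρ : Integrable (fun x => u x * ρ x) μ) :
    0 < ∫ x, u x * ρ x ∂μ := by
  have huρ_nonneg : 0 ≤ᵐ[μ] fun x => u x * ρ x := by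
    filter_upwards [hu, hρpos] with x hux hρx using mul_nonneg hux hρx.le
  refine (integral_nonneg_of_ae huρ_nonneg).lt_of_ne fun hzero => hupos.ne' ?_
  have huρ_zero := (integral_eq_zero_iff_of_nonneg_ae huρ_nonneg huρ).1 hzero.symm
  refine integral_eq_zero_of_ae ?_
  filter_upwards [huρ_zero, hρpos] with x huρx hρx
    using (mul_eq_zero.1 huρx).resolve_right hρx.ne'

lemma sq_lintegral_mul_le_lintegral_div_mul {f g k : α → ℝ} (hf : AEMeasurable f μ)
    (hg : AEMeasurable g μ) (hk : AEMeasurable k μ) (hkpos : ∀ᵐ x ∂μ, 0 < k x) :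
    (∫⁻ x, ENNReal.ofReal (f x * g x) ∂μ) ^ 2 ≤
      (∫⁻ x, ENNReal.ofReal (g x ^ 2 / k x) ∂μ) *
        ∫⁻ x, ENNReal.ofReal (f x ^ 2 * k x) ∂μ := by
  set A : α → ℝ≥0∞ := fun x => ENNReal.ofReal (g x ^ 2 / k x)
  set B : α → ℝ≥0∞ := fun x => ENNReal.ofReal (f x ^ 2 * k x)
  have hpoint : ∀ᵐ x ∂μ, ENNReal.ofReal (f x * g x) ≤ A x ^ (1 / 2 : ℝ) * B x ^ (1 / 2 : ℝ) := by
    filter_upwards [hkpos] with x hkx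
    have hprod : g x ^ 2 / k x * (f x ^ 2 * k x) = (f x * g x) ^ 2 := by field_simp
    calc ENNReal.ofReal (f x * g x)
        ≤ ENNReal.ofReal (√((f x * g x) ^ 2)) :=
          ENNReal.ofReal_le_ofReal (Real.le_sqrt_of_sq_le le_rfl)
      _ = ENNReal.ofReal (g x ^ 2 / k x * (f x ^ 2 * k x)) ^ (1 / 2 : ℝ) := by
          rw [hprod, Real.sqrt_eq_rpow, ENNReal.ofReal_rpow_of_nonneg (sq_nonneg _) (by norm_num)]
      _ = A x ^ (1 / 2 : ℝ) * B x ^ (1 / 2 : ℝ) := by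
          rw [ENNReal.ofReal_mul (by positivity), ENNReal.mul_rpow_of_nonneg _ _ (by norm_num)]
  have hsqrt_sq (t : ℝ≥0∞) : (t ^ (1 / 2 : ℝ)) ^ 2 = t := by
    rw [← ENNReal.rpow_mul_natCast]; norm_num
  calc (∫⁻ x, ENNReal.ofReal (f x * g x) ∂μ) ^ 2
      ≤ ((∫⁻ x, A x ∂μ) ^ (1 / 2 : ℝ) * (∫⁻ x, B x ∂μ) ^ (1 / 2 : ℝ)) ^ 2 := by
        gcongr
        exact (lintegral_mono_ae hpoint).trans <|
          ENNReal.lintegral_mul_norm_pow_le (by fun_prop) (by fun_prop)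
            (by norm_num) (by norm_num) (by norm_num)
    _ = (∫⁻ x, A x ∂μ) * ∫⁻ x, B x ∂μ := by rw [mul_pow, hsqrt_sq, hsqrt_sq]

-- Mathlib's Jensen inequality asks for a closed domain and continuity up to its boundary, which
-- excludes a weight on `(0, ∞)`; a supporting line at the mean needs neither.
lemma lintegral_mul_comp_le_of_concaveOn {s : Set ℝ} {h : ℝ → ℝ} {u ρ : α → ℝ}
    (hconc : ConcaveOn ℝ s h) (hnonneg : ∀ y ∈ s, 0 ≤ h y)
    (hu : 0 ≤ᵐ[μ] u) (hui : Integrable u μ) (hupos : 0 < ∫ x, u x ∂μ)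
    (hρs : ∀ᵐ x ∂μ, ρ x ∈ s) (huρ : Integrable (fun x => u x * ρ x) μ)
    (hmean : (∫ x, u x * ρ x ∂μ) / (∫ x, u x ∂μ) ∈ interior s) :
    ∫⁻ x, ENNReal.ofReal (u x * h (ρ x)) ∂μ ≤
      ENNReal.ofReal ((∫ x, u x ∂μ) * h ((∫ x, u x * ρ x ∂μ) / (∫ x, u x ∂μ))) := by
  set m := ∫ x, u x ∂μ with hm
  set a := (∫ x, u x * ρ x ∂μ) / m
  obtain ⟨c, hline⟩ := exists_forall_le_add_mul_sub_of_concaveOn hconc hmean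
  have hsplit : (fun x => u x * (h a + c * (ρ x - a))) =
      fun x => (h a - c * a) * u x + c * (u x * ρ x) := by
    funext x; ring
  have hint : Integrable (fun x => u x * (h a + c * (ρ x - a))) μ := by
    rw [hsplit]; exact (hui.const_mul _).add (huρ.const_mul _)
  have hvalue : ∫ x, u x * (h a + c * (ρ x - a)) ∂μ = m * h a := by
    have hcentre : ∫ x, u x * ρ x ∂μ = a * m := (div_mul_cancel₀ _ hupos.ne').symm
    rw [hsplit, integral_add (hui.const_mul _) (huρ.const_mul _), integral_const_mul,
      integral_const_mul, hcentre, ← hm]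
    ring
  have hle : ∀ᵐ x ∂μ, u x * h (ρ x) ≤ u x * (h a + c * (ρ x - a)) := by
    filter_upwards [hu, hρs] with x hux hρx using mul_le_mul_of_nonneg_left (hline _ hρx) hux
  have hline_nonneg : 0 ≤ᵐ[μ] fun x => u x * (h a + c * (ρ x - a)) := by
    filter_upwards [hu, hρs, hle] with x hux hρx hlex
      using (mul_nonneg hux (hnonneg _ hρx)).trans hlex
  calc ∫⁻ x, ENNReal.ofReal (u x * h (ρ x)) ∂μ
      ≤ ∫⁻ x, ENNReal.ofReal (u x * (h a + c * (ρ x - a))) ∂μ :=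
        lintegral_mono_ae (hle.mono fun _ hx => ENNReal.ofReal_le_ofReal hx)
    _ = ENNReal.ofReal (m * h a) := by
        rw [← ofReal_integral_eq_lintegral_ofReal hint hline_nonneg, hvalue]

theorem first_moment_estimate_general {E F : Type*} [SeminormedAddCommGroup E]
    [SeminormedAddCommGroup F] {X : α → E} {w : α → F} {ρ : α → ℝ} {h : ℝ → ℝ}
    (hX : Integrable (fun x => ‖X x‖ ^ 2) μ) (hXpos : 0 < ∫ x, ‖X x‖ ^ 2 ∂μ)
    (hconc : ConcaveOn ℝ (Ioi 0) h) (hpos : ∀ y ∈ Ioi (0 : ℝ), 0 < h y)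
    (hρ : AEMeasurable ρ μ) (hw : AEMeasurable (fun x => ‖w x‖) μ) (hρpos : ∀ᵐ x ∂μ, 0 < ρ x)
    (hXρ : Integrable (fun x => ‖X x‖ ^ 2 * ρ x) μ) :
    (∫⁻ x, ENNReal.ofReal (‖X x‖ * ‖w x‖) ∂μ) ^ 2 ≤
      (∫⁻ x, ENNReal.ofReal (‖w x‖ ^ 2 / h (ρ x)) ∂μ) *
        ENNReal.ofReal (∫ x, ‖X x‖ ^ 2 ∂μ) *
        ENNReal.ofReal (h ((∫ x, ‖X x‖ ^ 2 * ρ x ∂μ) / (∫ x, ‖X x‖ ^ 2 ∂μ))) := by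
  have hX_norm : AEMeasurable (fun x => ‖X x‖) μ := by
    simpa only [Real.sqrt_sq (norm_nonneg _)] using hX.aemeasurable.sqrt
  have hX_sq_nonneg : 0 ≤ᵐ[μ] fun x => ‖X x‖ ^ 2 := .of_forall fun x => sq_nonneg ‖X x‖
  have hhρ : AEMeasurable (fun x => h (ρ x)) μ :=
    aemeasurable_comp_of_continuousOn measurableSet_Ioi (hconc.continuousOn isOpen_Ioi) hρ hρpos
  have hmean : 0 < (∫ x, ‖X x‖ ^ 2 * ρ x ∂μ) / (∫ x, ‖X x‖ ^ 2 ∂μ) :=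
    div_pos (integral_mul_pos_of_ae_pos hX_sq_nonneg hXpos hρpos hXρ) hXpos
  rw [← mem_Ioi, ← isOpen_Ioi.interior_eq] at hmean
  have hjensen := lintegral_mul_comp_le_of_concaveOn hconc (fun y hy => (hpos y hy).le)
    hX_sq_nonneg hX hXpos hρpos hXρ hmean
  rw [mul_assoc, ← ENNReal.ofReal_mul hXpos.le]
  exact (sq_lintegral_mul_le_lintegral_div_mul hX_norm hw hhρ
    (hρpos.mono fun x hx => hpos _ hx)).trans (mul_le_mul_right hjensen _)

end MeasureSpace

/-- First-moment estimate: for a finite measure `γ` with positive finite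
second moment, a concave nondecreasing weight `h`, a positive density `ρ` with
`∫ |x|² ρ dγ < ∞`, the first moment of `|w|·γ` satisfies
`(∫ |x||w| dγ)² ≤ (∫ |w|²/h(ρ) dγ) · m₂(γ) · h(m₂(ργ)/m₂(γ))`. -/
theorem first_moment_estimate
    (d : ℕ) (γ : Measure (EuclideanSpace ℝ (Fin d))) [IsFiniteMeasure γ]
    (hm2int : Integrable (fun x : EuclideanSpace ℝ (Fin d) => ‖x‖ ^ 2) γ)
    (hm2pos : 0 < ∫ x, ‖x‖ ^ 2 ∂γ)
    (h : ℝ → ℝ) (hconc : ConcaveOn ℝ (Ioi 0) h) (hmono : MonotoneOn h (Ioi 0))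
    (hpos : ∀ x ∈ Ioi (0 : ℝ), 0 < h x)
    (ρ : EuclideanSpace ℝ (Fin d) → ℝ)
    (w : EuclideanSpace ℝ (Fin d) → EuclideanSpace ℝ (Fin d))
    (hρm : Measurable ρ) (hwm : Measurable w) (hρpos : ∀ x, 0 < ρ x)
    (hρm2int : Integrable (fun x => ‖x‖ ^ 2 * ρ x) γ) :
    (∫⁻ x, ENNReal.ofReal (‖x‖ * ‖w x‖) ∂γ) ^ 2 ≤
      (∫⁻ x, ENNReal.ofReal (‖w x‖ ^ 2 / h (ρ x)) ∂γ) *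
        ENNReal.ofReal (∫ x, ‖x‖ ^ 2 ∂γ) *
        ENNReal.ofReal (h ((∫ x, ‖x‖ ^ 2 * ρ x ∂γ) / (∫ x, ‖x‖ ^ 2 ∂γ))) :=
  first_moment_estimate_general hm2int hm2pos hconc hpos hρm.aemeasurable
    hwm.norm.aemeasurable (.of_forall hρpos) hρm2int
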